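/- Let A ∈ ℝ^{m×n}, η ∈ ℝ^m, let k be a positive integer, and let δ₂ be a restricted isometry constant of order 2k for A. Let v ∈ ℝⁿ and let Λ ⊆ {1,…,n} be an index set with |Λ| ≤ 2k and supp(v) ⊆ Λ. Then ‖((I − AᵀA)v + Aᵀη)_Λ‖₂ ≤ δ₂‖v‖₂ + √(1+δ₂)·‖η‖₂. -/

import Mathlib

/-!
Let `w` be the restricted vector on the left. Since `w` is a coordinate restriction,
`‖w‖² = ⟪w, (I - AᵀA) v + Aᵀ η⟫ = (⟪w, v⟫ - ⟪A w, A v⟫) + ⟪A w, η⟫`.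

Both `w` and `v` are supported in `Λ`, so every combination of them is `2k`-sparse, and polarization
turns the restricted isometry property into `⟪w, v⟫ - ⟪A w, A v⟫ ≤ δ ‖w‖ ‖v‖`
(`dot_sub_dot_mulVec_le`). Cauchy–Schwarz and the upper isometry bound for `w` give
`⟪A w, η⟫ ≤ √(1 + δ) ‖w‖ ‖η‖`. Dividing by `‖w‖` yields the claim.
-/


open Matrix Finset Filter

/-- Euclidean (ℓ₂) norm of a vector. -/
noncomputable def nrm {n : ℕ} (x : Fin n → ℝ) : ℝ := Real.sqrt (∑ i, x i ^ 2)

/-- A vector is `s`-sparse if it has at most `s` nonzero entries. -/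
def sparse {n : ℕ} (s : ℕ) (x : Fin n → ℝ) : Prop :=
  ((Finset.univ : Finset (Fin n)).filter fun i => x i ≠ 0).card ≤ s

/-- Support of a vector, as a finset. -/
noncomputable def suppF {n : ℕ} (x : Fin n → ℝ) : Finset (Fin n) :=
  (Finset.univ : Finset (Fin n)).filter fun i => x i ≠ 0

/-- Restriction of a vector to an index set (zero outside). -/
def restr {n : ℕ} (x : Fin n → ℝ) (Ω : Finset (Fin n)) : Fin n → ℝ :=
  fun i => if i ∈ Ω then x i else 0

/-- `δ ∈ [0,1)` is a restricted isometry constant of order `s` for `A`. -/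
def RIC {m n : ℕ} (A : Matrix (Fin m) (Fin n) ℝ) (s : ℕ) (δ : ℝ) : Prop :=
  0 ≤ δ ∧ δ < 1 ∧ ∀ x : Fin n → ℝ, sparse s x →
    (1 - δ) * nrm x ^ 2 ≤ nrm (A.mulVec x) ^ 2 ∧
      nrm (A.mulVec x) ^ 2 ≤ (1 + δ) * nrm x ^ 2

/-- `h` is a hard thresholding of `z` at level `q` with support `Ω`. -/
def IsHT {n : ℕ} (q : ℕ) (z h : Fin n → ℝ) (Ω : Finset (Fin n)) : Prop :=
  Ω.card = q ∧ (∀ i ∈ Ω, h i = z i) ∧ (∀ i ∉ Ω, h i = 0) ∧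
    ∀ i ∈ Ω, ∀ j ∉ Ω, |z j| ≤ |z i|

lemma nrm_nonneg' {n : ℕ} (x : Fin n → ℝ) : 0 ≤ nrm x := Real.sqrt_nonneg _

lemma nrm_sq_eq_dot {n : ℕ} (x : Fin n → ℝ) : nrm x ^ 2 = x ⬝ᵥ x := by
  rw [nrm, Real.sq_sqrt (Finset.sum_nonneg fun i _ => sq_nonneg _)]
  simp only [dotProduct, sq]

lemma eq_zero_of_nrm_eq_zero {n : ℕ} {x : Fin n → ℝ} (h : nrm x = 0) : x = 0 := by
  rw [← dotProduct_self_eq_zero, ← nrm_sq_eq_dot, h]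
  norm_num

lemma dot_le_nrm_mul_nrm {n : ℕ} (x y : Fin n → ℝ) : x ⬝ᵥ y ≤ nrm x * nrm y :=
  Real.sum_mul_le_sqrt_mul_sqrt _ _ _

lemma sparse_of_forall_notMem {n s : ℕ} {Λ : Finset (Fin n)} (hΛ : Λ.card ≤ s)
    {x : Fin n → ℝ} (hx : ∀ i ∉ Λ, x i = 0) : sparse s x := by
  refine (Finset.card_le_card fun i hi => ?_).trans hΛ
  by_contra h
  exact (Finset.mem_filter.1 hi).2 (hx i h)

lemma restr_dot_self {n : ℕ} (z : Fin n → ℝ) (Λ : Finset (Fin n)) :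
    restr z Λ ⬝ᵥ restr z Λ = restr z Λ ⬝ᵥ z := by
  refine Finset.sum_congr rfl fun i _ => ?_
  by_cases h : i ∈ Λ <;> simp [restr, h]

/-- The bilinear form of the restricted isometry property: on vectors supported in a common index
set of size at most `s`, the form of `I - AᵀA` is bounded by `δ`. -/
lemma dot_sub_dot_mulVec_le {m n s : ℕ} {A : Matrix (Fin m) (Fin n) ℝ} {δ : ℝ} (hA : RIC A s δ)
    {Λ : Finset (Fin n)} (hΛ : Λ.card ≤ s) {x y : Fin n → ℝ}
    (hx : ∀ i ∉ Λ, x i = 0) (hy : ∀ i ∉ Λ, y i = 0) :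
    x ⬝ᵥ y - A.mulVec x ⬝ᵥ A.mulVec y ≤ δ * (nrm x * nrm y) := by
  have hpol (a b : ℝ) : 4 * (a * b) * (x ⬝ᵥ y - A.mulVec x ⬝ᵥ A.mulVec y) ≤
      2 * δ * (a ^ 2 * nrm x ^ 2 + b ^ 2 * nrm y ^ 2) := by
    have hp := (hA.2.2 (a • x + b • y)
      (sparse_of_forall_notMem hΛ fun i hi => by simp [hx i hi, hy i hi])).1
    have hm := (hA.2.2 (a • x - b • y)
      (sparse_of_forall_notMem hΛ fun i hi => by simp [hx i hi, hy i hi])).2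
    simp only [nrm_sq_eq_dot, mulVec_add, mulVec_sub, mulVec_smul, add_dotProduct, dotProduct_add,
      sub_dotProduct, dotProduct_sub, smul_dotProduct, dotProduct_smul, smul_eq_mul,
      dotProduct_comm y x, dotProduct_comm (A.mulVec y) (A.mulVec x)] at hp hm ⊢
    linarith
  have hδ : 0 ≤ δ * (nrm x * nrm y) :=
    mul_nonneg hA.1 (mul_nonneg (nrm_nonneg' x) (nrm_nonneg' y))
  rcases (nrm_nonneg' x).eq_or_lt with h0 | hx0
  · obtain rfl := eq_zero_of_nrm_eq_zero h0.symm
    simpa using hδ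
  rcases (nrm_nonneg' y).eq_or_lt with h0 | hy0
  · obtain rfl := eq_zero_of_nrm_eq_zero h0.symm
    simpa using hδ
  refine le_of_mul_le_mul_left ?_ (mul_pos hx0 hy0)
  -- Scaling `x` and `y` to equal norms makes the polarized bound, an arithmetic mean of squared
  -- norms, coincide with the product of the norms.
  linarith [hpol (nrm y) (nrm x)]

theorem stmt15 {m n : ℕ} (k : ℕ) (hk : 0 < k) (A : Matrix (Fin m) (Fin n) ℝ)
    (η : Fin m → ℝ) (δ₂ : ℝ) (h2 : RIC A (2 * k) δ₂)
    (v : Fin n → ℝ) (Λ : Finset (Fin n)) (hΛ : Λ.card ≤ 2 * k)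
    (hsupp : suppF v ⊆ Λ) :
    nrm (restr (((1 : Matrix (Fin n) (Fin n) ℝ) - Aᵀ * A).mulVec v + Aᵀ.mulVec η) Λ) ≤
      δ₂ * nrm v + Real.sqrt (1 + δ₂) * nrm η := by
  set z := ((1 : Matrix (Fin n) (Fin n) ℝ) - Aᵀ * A).mulVec v + Aᵀ.mulVec η with hz
  set w := restr z Λ with hw
  have hwΛ : ∀ i ∉ Λ, w i = 0 := fun i hi => by simp [hw, restr, hi]
  have hvΛ : ∀ i ∉ Λ, v i = 0 := fun i hi => by
    by_contra h
    exact hi (hsupp (Finset.mem_filter.2 ⟨Finset.mem_univ i, h⟩))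
  have hδ := h2.1
  have hbil := dot_sub_dot_mulVec_le h2 hΛ hwΛ hvΛ
  have hAw : nrm (A.mulVec w) ≤ Real.sqrt (1 + δ₂) * nrm w := by
    refine (sq_le_sq₀ (nrm_nonneg' _) (mul_nonneg (Real.sqrt_nonneg _) (nrm_nonneg' w))).1 ?_
    rw [mul_pow, Real.sq_sqrt (by linarith)]
    exact (h2.2.2 w (sparse_of_forall_notMem hΛ hwΛ)).2
  have hη : A.mulVec w ⬝ᵥ η ≤ Real.sqrt (1 + δ₂) * nrm w * nrm η :=
    (dot_le_nrm_mul_nrm _ _).trans (mul_le_mul_of_nonneg_right hAw (nrm_nonneg' η))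
  have hadj : ∀ u : Fin m → ℝ, w ⬝ᵥ Aᵀ.mulVec u = A.mulVec w ⬝ᵥ u := fun u => by
    rw [dotProduct_mulVec, vecMul_transpose]
  have hsq : nrm w ^ 2 = w ⬝ᵥ v - A.mulVec w ⬝ᵥ A.mulVec v + A.mulVec w ⬝ᵥ η := by
    rw [nrm_sq_eq_dot, hw, restr_dot_self, ← hw, hz, dotProduct_add, sub_mulVec, one_mulVec,
      dotProduct_sub, ← mulVec_mulVec, hadj, hadj]
  rcases (nrm_nonneg' w).eq_or_lt with h0 | hw0
  · rw [← h0]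
    exact add_nonneg (mul_nonneg hδ (nrm_nonneg' v))
      (mul_nonneg (Real.sqrt_nonneg _) (nrm_nonneg' η))
  · refine le_of_mul_le_mul_left ?_ hw0
    linarith
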